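/- Let d ≥ 3 and let I = I_3(G) ⊆ S = ℂ[m_0,…,m_d]. Let ≼ be a monomial order on the exponent vectors of S such that for every choice of columns 1 ≤ i < j < k ≤ d, the leading monomial of the corresponding 3×3 minor of G with respect to ≼ is its antidiagonal monomial, i.e., the product of the (1,k), (2,j) and (3,i) entries of G (for example, the degree reverse lexicographic order with m_0 > m_1 > ⋯ > m_d has this property). Then the 3×3 minors of G form a Gröbner basis of I with respect to ≼: for every nonzero f ∈ I, the leading monomial of f is divisible by the leading monomial of some 3×3 minor of G. -/

import Mathlib

open MvPolynomial

/-- The `3 × d` matrix `G` of the gamma moment variety: its `c`-th column, for `1 ≤ c ≤ d`,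
is `((c-1)·m_{c-1}, m_{c-1}, m_c)ᵀ`.  Columns are indexed by `Fin d`, with `c : Fin d`
corresponding to the paper's column `c + 1`. -/
noncomputable def gammaMatrix (d : ℕ) :
    Matrix (Fin 3) (Fin d) (MvPolynomial (Fin (d + 1)) ℂ) :=
  Matrix.of fun r c =>
    ![C (c.val : ℂ) * X ⟨c.val, by have := c.isLt; omega⟩,
      X ⟨c.val, by have := c.isLt; omega⟩,
      X ⟨c.val + 1, by have := c.isLt; omega⟩] r

/-- The ideal `I₃(G)` generated by all `3 × 3` minors of `G`, i.e. determinants of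
submatrices obtained by choosing `3` of the `d` columns. -/
noncomputable def gammaIdeal (d : ℕ) : Ideal (MvPolynomial (Fin (d + 1)) ℂ) :=
  Ideal.span
    { p | ∃ s : Fin 3 → Fin d, StrictMono s ∧ p = ((gammaMatrix d).submatrix id s).det }

/-!
The moments of the gamma distributions parametrize the variety of `I₃(G)`: substituting
`m_c ↦ s t ^ c · x (x + 1) ⋯ (x + c - 1)` makes the last row of `G` equal to `t` times the first row
plus `t x` times the second, so every minor is mapped to zero. It suffices to show that the standard
monomials, those divisible by no antidiagonal monomial, have linearly independent images, because
then every normal form of an element of the ideal vanishes. The image of the monomial with exponent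
`e` has a root of multiplicity `∑_{i > k} e_i` at `x = -k`. A standard monomial has at most one
factor strictly between `m_0` and its largest interior variable, so within a fixed degree and index
sum it is determined by that variable and by the exponent of `m_d`; ordering by these two data, the
smallest monomial is detected by its root multiplicity.
-/

section MonomialOrder

variable {σ : Type*}

/-- A copy of `σ →₀ ℕ` without the coordinatewise order, so that it can carry a monomial order. -/
def ExponentSyn (σ : Type*) : Type _ := σ →₀ ℕ

noncomputable instance : AddCommMonoid (ExponentSyn σ) :=
  inferInstanceAs (AddCommMonoid (σ →₀ ℕ))

/-- The identity map, regarding an exponent vector as an element of `ExponentSyn σ`. -/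
noncomputable def toExponentSyn : (σ →₀ ℕ) ≃+ ExponentSyn σ := AddEquiv.refl _

/-- The Mathlib monomial order attached to a compatible linear order `le` on exponent vectors with
least element `0`; such an order is a well-order by Dickson's lemma. -/
noncomputable def monomialOrderOfRel [Finite σ] (le : (σ →₀ ℕ) → (σ →₀ ℕ) → Prop)
    (hlin : IsLinearOrder _ le) (hadd : ∀ a b c, le a b → le (a + c) (b + c))
    (hzero : ∀ a, le 0 a) : MonomialOrder σ :=
  letI linearOrder : LinearOrder (ExponentSyn σ) :=
    { le := le
      le_refl := hlin.refl
      le_trans := hlin.trans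
      le_antisymm := hlin.antisymm
      le_total := hlin.total
      toDecidableLE := Classical.decRel le }
  have monotone_toSyn : Monotone (toExponentSyn (σ := σ)) := fun a b h => by
    have hab : le (0 + a) (b - a + a) := hadd 0 (b - a) a (hzero _)
    rwa [zero_add, tsub_add_cancel_of_le h] at hab
  { syn := ExponentSyn σ
    addCommMonoidSyn := inferInstance
    linearOrderSyn := linearOrder
    isOrderedAddMonoid_syn := { add_le_add_left a b h c := hadd a b c h }
    toSyn := toExponentSyn
    toSyn_monotone := monotone_toSyn
    wellFoundedLT_syn := by
      have := monotone_toSyn.wellQuasiOrderedLE_of_wellQuasiOrderedLE_of_surjective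
        toExponentSyn.surjective
      infer_instance }

lemma monomialOrderOfRel_toSyn_le_iff [Finite σ] {le : (σ →₀ ℕ) → (σ →₀ ℕ) → Prop}
    (hlin : IsLinearOrder _ le) (hadd : ∀ a b c, le a b → le (a + c) (b + c))
    (hzero : ∀ a, le 0 a) {a b : σ →₀ ℕ} :
    (monomialOrderOfRel le hlin hadd hzero).toSyn a ≤
      (monomialOrderOfRel le hlin hadd hzero).toSyn b ↔ le a b :=
  Iff.rfl

lemma monomialOrder_degree_eq {R : Type*} [CommSemiring R] (m : MonomialOrder σ)
    {p : MvPolynomial σ R} {a : σ →₀ ℕ} (ha : a ∈ p.support)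
    (hmax : ∀ b ∈ p.support, m.toSyn b ≤ m.toSyn a) : m.degree p = a :=
  m.toSyn.injective <| (hmax _ (m.degree_mem_support (support_nonempty.1 ⟨a, ha⟩))).antisymm
    (m.le_degree ha)

/-- A normal form of `f` modulo `B` lies in `span B`, so it vanishes, and division expresses `f` as
a combination of `B` without cancellation above the leading monomial of `f`. -/
theorem exists_degree_le_degree_of_mem_span {R : Type*} [CommRing R] (m : MonomialOrder σ)
    {B : Set (MvPolynomial σ R)}
    (hB : ∀ b ∈ B, IsUnit (m.leadingCoeff b))
    (hnormal : ∀ r ∈ Ideal.span B,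
      (∀ e ∈ r.support, ∀ b ∈ B, ¬ m.degree b ≤ e) → r = 0)
    {f : MvPolynomial σ R} (hf : f ∈ Ideal.span B) (hf0 : f ≠ 0) :
    ∃ b ∈ B, m.degree b ≤ m.degree f := by
  obtain ⟨g, r, hfr, hg, hr⟩ := m.div_set hB f
  set q := Finsupp.linearCombination _ (fun b : B => (b : MvPolynomial σ R)) g with hq
  have hqB : q ∈ Ideal.span B := (Finsupp.mem_span_iff_linearCombination _ _ _).2 ⟨g, rfl⟩
  have hr0 : r = 0 := hnormal r ((Ideal.add_mem_iff_right _ hqB).1 (hfr ▸ hf)) hr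
  have hlead : coeff (m.degree f) q ≠ 0 := by
    simpa only [hfr, hr0, add_zero] using m.coeff_degree_ne_zero_iff.2 hf0
  obtain ⟨b, -, hb⟩ : ∃ b ∈ g.support, coeff (m.degree f) (b * g b : MvPolynomial σ R) ≠ 0 := by
    apply Finset.exists_ne_zero_of_sum_ne_zero
    simpa [hq, Finsupp.linearCombination_apply, Finsupp.sum, coeff_sum, mul_comm] using hlead
  have hdegree : m.degree (b * g b : MvPolynomial σ R) = m.degree f :=
    m.toSyn.injective ((hg b).antisymm (m.le_degree (mem_support_iff.2 hb)))
  have hgb : g b ≠ 0 := fun h => hb (by simp [h])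
  refine ⟨b, b.2, ?_⟩
  rw [← hdegree, m.degree_mul_of_left_mem_nonZeroDivisors (hB b b.2).mem_nonZeroDivisors hgb]
  exact le_self_add

end MonomialOrder

section GradedAeval

variable {σ R A M : Type*} [CommSemiring R] [CommSemiring A] [Algebra R A] [AddCommMonoid M]

/-- The evaluation `xᵢ ↦ q i · T ^ w i`, which records the weight of a monomial in the exponent of
the formal variable `T`. -/
noncomputable def gradedAeval (w : σ → M) (q : σ → A) :
    MvPolynomial σ R →ₐ[R] AddMonoidAlgebra A M :=
  aeval fun i => AddMonoidAlgebra.single (w i) (q i)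

lemma gradedAeval_monomial (w : σ → M) (q : σ → A) (e : σ →₀ ℕ) (c : R) :
    gradedAeval w q (monomial e c) =
      AddMonoidAlgebra.single (Finsupp.weight w e) (c • e.prod fun i n => q i ^ n) := by
  simp [gradedAeval, aeval_monomial, AddMonoidAlgebra.single_pow, Finsupp.weight_apply,
    Algebra.smul_def]

lemma coeff_gradedAeval [DecidableEq M] (w : σ → M) (q : σ → A) (f : MvPolynomial σ R) (g : M) :
    (gradedAeval w q f).coeff g =
      ∑ e ∈ f.support with Finsupp.weight w e = g, coeff e f • e.prod fun i n => q i ^ n := by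
  conv_lhs => rw [f.as_sum, map_sum]
  simp [gradedAeval_monomial, Finset.sum_filter, Finsupp.single_apply]

end GradedAeval

section RootMultiplicity

variable {R : Type*} [CommRing R] [IsDomain R]

lemma eq_zero_of_sum_smul_eq_zero_of_rootMultiplicity_lt {ι : Type*}
    {T : Finset ι} {c : ι → R} {p : ι → Polynomial R} (hsum : ∑ i ∈ T, c i • p i = 0)
    {i : ι} (hi : i ∈ T) (hp : p i ≠ 0) (x : R)
    (hlt : ∀ j ∈ T, j ≠ i → (p i).rootMultiplicity x < (p j).rootMultiplicity x) : c i = 0 := by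
  classical
  by_contra hc
  have hrest : (Polynomial.X - Polynomial.C x) ^ ((p i).rootMultiplicity x + 1) ∣
      ∑ j ∈ T.erase i, c j • p j := by
    refine Finset.dvd_sum fun j hj => ?_
    rw [Polynomial.smul_eq_C_mul]
    exact ((pow_dvd_pow _ (hlt j (Finset.mem_of_mem_erase hj) (Finset.ne_of_mem_erase hj))).trans
      (Polynomial.pow_rootMultiplicity_dvd _ _)).mul_left _
  rw [← Finset.add_sum_erase _ _ hi] at hsum
  have hdvd : (Polynomial.X - Polynomial.C x) ^ ((p i).rootMultiplicity x + 1) ∣ c i • p i :=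
    (dvd_add_left hrest).1 (hsum ▸ dvd_zero _)
  have := (Polynomial.le_rootMultiplicity_iff (smul_ne_zero hc hp)).2 hdvd
  rw [Polynomial.smul_eq_C_mul, Polynomial.rootMultiplicity_mul,
    Polynomial.rootMultiplicity_C] at this
  · omega
  · simp [hc, hp]

lemma rootMultiplicity_finsuppProd_pow {σ : Type*} (e : σ →₀ ℕ) {q : σ → Polynomial R}
    (hq : ∀ i, q i ≠ 0) (x : R) :
    (e.prod fun i n => q i ^ n).rootMultiplicity x =
      e.sum fun i n => n * (q i).rootMultiplicity x := by
  classical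
  simp only [← Polynomial.count_roots]
  rw [Finsupp.prod, Polynomial.roots_prod]
  · simp [Multiset.count_bind, Finsupp.sum]
  · exact Finset.prod_ne_zero_iff.2 fun i _ => pow_ne_zero _ (hq i)

variable [CharZero R]

lemma rootMultiplicity_neg_natCast_ascPochhammer (n k : ℕ) :
    (ascPochhammer R n).rootMultiplicity (-(k : R)) = if k < n then 1 else 0 := by
  induction n with
  | zero => simp [Polynomial.rootMultiplicity_eq_zero]
  | succ n ih =>
    have hX : (Polynomial.X + (n : Polynomial R)) = Polynomial.X - Polynomial.C (-(n : R)) := by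
      simp
    classical
    rw [ascPochhammer_succ_right, Polynomial.rootMultiplicity_mul, ih, hX,
      Polynomial.rootMultiplicity_X_sub_C]
    · simp only [neg_inj, Nat.cast_inj]
      grind
    · rw [← ascPochhammer_succ_right]
      exact (monic_ascPochhammer R _).ne_zero

end RootMultiplicity

lemma eq_zero_or_exists_eq_single_one {α : Type*} {f : α →₀ ℕ}
    (h : ∀ i j, ¬ Finsupp.single i 1 + Finsupp.single j 1 ≤ f) :
    f = 0 ∨ ∃ j, f = Finsupp.single j 1 := by
  refine or_iff_not_imp_left.2 fun hf => ?_
  obtain ⟨j, hj⟩ := Finsupp.ne_iff.1 hf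
  have hjf : Finsupp.single j 1 ≤ f := Finsupp.single_le_iff.2 (Nat.one_le_iff_ne_zero.2 hj)
  refine ⟨j, (tsub_eq_zero_iff_le.1 ?_).antisymm hjf⟩
  by_contra hrest
  obtain ⟨i, hi⟩ := Finsupp.ne_iff.1 hrest
  refine h i j ?_
  rw [← le_tsub_iff_right hjf]
  exact Finsupp.single_le_iff.2 (Nat.one_le_iff_ne_zero.2 hi)

section StandardExponents

variable {d : ℕ}

/-- The exponent vector of the antidiagonal monomial `m_i m_{j-1} m_{k-1}` of the minor of `G` with
columns `i < j < k`; as columns are counted from `0` here, `s` selects the columns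
`s 0 + 1`, `s 1 + 1`, `s 2 + 1`. -/
noncomputable def antidiagExponent (s : Fin 3 → Fin d) : Fin (d + 1) →₀ ℕ :=
  Finsupp.single (s 0).succ 1 + Finsupp.single (s 1).castSucc 1 + Finsupp.single (s 2).castSucc 1

/-- Exponent vectors of the standard monomials: those not divisible by the antidiagonal monomial of
any minor of `G`. -/
def IsStandard (e : Fin (d + 1) →₀ ℕ) : Prop :=
  ∀ s : Fin 3 → Fin d, StrictMono s → ¬ antidiagExponent s ≤ e

lemma IsStandard.not_single_add_single_add_single_le {e : Fin (d + 1) →₀ ℕ} (he : IsStandard e)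
    {i j k : Fin (d + 1)} (hi : 0 < i) (hij : i ≤ j) (hjk : j < k) (hk : k < Fin.last d) :
    ¬ Finsupp.single i 1 + Finsupp.single j 1 + Finsupp.single k 1 ≤ e := by
  have hs : StrictMono ![i.pred hi.ne', j.castLT (hjk.trans hk), k.castLT hk] := by
    rw [Fin.strictMono_iff_lt_succ, Fin.forall_fin_two]
    exact ⟨Fin.lt_def.2 ((Nat.sub_lt hi Nat.one_pos).trans_le hij), hjk⟩
  simpa [antidiagExponent] using he _ hs

/-- The largest index of an interior variable `m_i`, `0 < i < d`, occurring in an exponent vector,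
set to `1` if there is none. -/
noncomputable def topIndex (e : Fin (d + 1) →₀ ℕ) : Fin (d + 1) :=
  (e.support.erase (Fin.last d)).sup id ⊔ 1

lemma one_le_topIndex (e : Fin (d + 1) →₀ ℕ) : 1 ≤ topIndex e := le_sup_right

lemma topIndex_pos (hd : 2 ≤ d) (e : Fin (d + 1) →₀ ℕ) : 0 < topIndex e :=
  have : NeZero d := ⟨by omega⟩
  Fin.one_pos'.trans_le (one_le_topIndex e)

lemma topIndex_lt_last (hd : 2 ≤ d) (e : Fin (d + 1) →₀ ℕ) : topIndex e < Fin.last d := by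
  have h1 : (1 : Fin (d + 1)) < Fin.last d := by
    rw [Fin.lt_def, Fin.val_last, Fin.val_one', Nat.mod_eq_of_lt] <;> omega
  refine max_lt ((Finset.sup_lt_iff (bot_le.trans_lt h1)).2 fun i hi => ?_) h1
  exact Fin.lt_last_iff_ne_last.2 (Finset.ne_of_mem_erase hi)

lemma eq_zero_of_topIndex_lt {e : Fin (d + 1) →₀ ℕ} {i : Fin (d + 1)} (hi : topIndex e < i)
    (hlast : i < Fin.last d) : e i = 0 := by
  by_contra h
  have hmem : i ∈ e.support.erase (Fin.last d) :=
    Finset.mem_erase.2 ⟨hlast.ne, Finsupp.mem_support_iff.2 h⟩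
  exact hi.not_ge ((Finset.le_sup (f := id) hmem).trans le_sup_left)

lemma apply_topIndex_ne_zero {e : Fin (d + 1) →₀ ℕ} (h : 1 < topIndex e) :
    e (topIndex e) ≠ 0 := by
  have hsup : topIndex e = (e.support.erase (Fin.last d)).sup id :=
    (max_choice _ _).resolve_right h.ne'
  have hne : (e.support.erase (Fin.last d)).Nonempty := by
    rw [Finset.nonempty_iff_ne_empty]
    rintro h0
    rw [hsup, h0, Finset.sup_empty] at h
    exact not_lt_bot h
  obtain ⟨i, hi, hsup_eq⟩ := Finset.exists_mem_eq_sup _ hne id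
  rw [hsup, hsup_eq]
  exact Finsupp.mem_support_iff.1 (Finset.mem_of_mem_erase hi)

lemma sum_Ioi_topIndex (hd : 2 ≤ d) (e : Fin (d + 1) →₀ ℕ) :
    ∑ i ∈ Finset.Ioi (topIndex e), e i = e (Fin.last d) := by
  have hlast : Fin.last d ∈ Finset.Ioi (topIndex e) := Finset.mem_Ioi.2 (topIndex_lt_last hd e)
  refine Finset.sum_eq_single_of_mem _ hlast fun i hi hne => ?_
  exact eq_zero_of_topIndex_lt (Finset.mem_Ioi.1 hi) (Fin.lt_last_iff_ne_last.2 hne)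

lemma apply_last_lt_sum_Ioi_of_lt_topIndex (hd : 2 ≤ d) {e : Fin (d + 1) →₀ ℕ}
    {k : Fin (d + 1)} (hk : 1 ≤ k) (hlt : k < topIndex e) :
    e (Fin.last d) < ∑ i ∈ Finset.Ioi k, e i := by
  have hlast := topIndex_lt_last hd e
  exact Finset.single_lt_sum hlast.ne (Finset.mem_Ioi.2 (hlt.trans hlast)) (Finset.mem_Ioi.2 hlt)
    (apply_topIndex_ne_zero (hk.trans_lt hlt)).bot_lt fun _ _ _ => Nat.zero_le _

/-- The part of an exponent vector carried by the interior variables below the top one. -/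
noncomputable def belowTop (e : Fin (d + 1) →₀ ℕ) : Fin (d + 1) →₀ ℕ :=
  e.filter fun i => 0 < i ∧ i < topIndex e

lemma belowTop_apply (e : Fin (d + 1) →₀ ℕ) (i : Fin (d + 1)) :
    belowTop e i = if 0 < i ∧ i < topIndex e then e i else 0 :=
  Finsupp.filter_apply _ _ _

lemma pos_and_lt_topIndex_of_single_le_belowTop {e : Fin (d + 1) →₀ ℕ} {i : Fin (d + 1)}
    (h : Finsupp.single i 1 ≤ belowTop e) : 0 < i ∧ i < topIndex e := by
  by_contra hi
  simpa [belowTop_apply, hi] using Finsupp.single_le_iff.1 h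

lemma eq_add_belowTop_add (hd : 2 ≤ d) (e : Fin (d + 1) →₀ ℕ) :
    e = Finsupp.single 0 (e 0) + belowTop e + Finsupp.single (topIndex e) (e (topIndex e)) +
      Finsupp.single (Fin.last d) (e (Fin.last d)) := by
  ext i
  have hpos := topIndex_pos hd e
  have hlast := topIndex_lt_last hd e
  have hzero : topIndex e < i → i < Fin.last d → e i = 0 := eq_zero_of_topIndex_lt
  have hi : i ≤ Fin.last d := Fin.le_last i
  simp only [Finsupp.add_apply, Finsupp.single_apply, belowTop_apply]
  grind

lemma IsStandard.not_single_add_single_le_belowTop (hd : 2 ≤ d) {e : Fin (d + 1) →₀ ℕ}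
    (he : IsStandard e) (i j : Fin (d + 1)) :
    ¬ Finsupp.single i 1 + Finsupp.single j 1 ≤ belowTop e := by
  wlog hij : i ≤ j generalizing i j
  · rw [add_comm (Finsupp.single i 1)]
    exact this j i (le_of_not_ge hij)
  intro hle
  obtain ⟨hi, -⟩ := pos_and_lt_topIndex_of_single_le_belowTop (le_self_add.trans hle)
  obtain ⟨-, hj⟩ := pos_and_lt_topIndex_of_single_le_belowTop (le_add_self.trans hle)
  have htop : e (topIndex e) ≠ 0 :=
    apply_topIndex_ne_zero ((Fin.one_le_of_ne_zero hi.ne').trans_lt (hij.trans_lt hj))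
  have hbelow : belowTop e + Finsupp.single (topIndex e) 1 ≤ e := fun l => by
    rw [Finsupp.add_apply, belowTop_apply, Finsupp.single_apply]
    grind
  exact he.not_single_add_single_add_single_le hi hij hj (topIndex_lt_last hd e)
    ((add_le_add_left hle _).trans hbelow)

/-- Adding `single 0 1` lets `j = 0` stand for the case without an interior variable below the top
one. -/
lemma IsStandard.exists_add_single_zero_eq (hd : 2 ≤ d) {e : Fin (d + 1) →₀ ℕ}
    (he : IsStandard e) :
    ∃ a n, ∃ j < topIndex e, e + Finsupp.single 0 1 = Finsupp.single 0 a + Finsupp.single j 1 +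
      Finsupp.single (topIndex e) n + Finsupp.single (Fin.last d) (e (Fin.last d)) := by
  have he_eq := eq_add_belowTop_add hd e
  rcases eq_zero_or_exists_eq_single_one (he.not_single_add_single_le_belowTop hd) with h | ⟨j, h⟩
  · refine ⟨e 0, e (topIndex e), 0, topIndex_pos hd e, ?_⟩
    conv_lhs => rw [he_eq, h]
    abel
  · refine ⟨e 0 + 1, e (topIndex e), j,
      (pos_and_lt_topIndex_of_single_le_belowTop h.ge).2, ?_⟩
    conv_lhs => rw [he_eq, h]
    rw [Finsupp.single_add]
    abel

/-- The weights recording the degree of a monomial and the sum of the indices of its variables. -/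
def bidegreeWeight (d : ℕ) : Fin (d + 1) → ℕ × ℕ := fun i => (1, i)

lemma IsStandard.eq_of_weight_eq (hd : 2 ≤ d) {e e' : Fin (d + 1) →₀ ℕ} (he : IsStandard e)
    (he' : IsStandard e')
    (hweight : Finsupp.weight (bidegreeWeight d) e = Finsupp.weight (bidegreeWeight d) e')
    (htop : topIndex e = topIndex e') (hlast : e (Fin.last d) = e' (Fin.last d)) : e = e' := by
  obtain ⟨a, n, j, hj, h⟩ := he.exists_add_single_zero_eq hd
  obtain ⟨a', n', j', hj', h'⟩ := he'.exists_add_single_zero_eq hd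
  rw [← htop] at h' hj'
  rw [← hlast] at h'
  have hbidegree := congrArg (Finsupp.weight (bidegreeWeight d)) h
  rw [map_add, hweight, ← map_add, h'] at hbidegree
  simp only [map_add, Finsupp.weight_single, bidegreeWeight, Prod.smul_mk, Prod.mk_add_mk,
    Prod.mk.injEq, smul_eq_mul, mul_one, one_mul, mul_zero, zero_add, Fin.val_zero,
    Nat.add_right_cancel_iff] at hbidegree
  obtain ⟨hdegree, hindex⟩ := hbidegree
  -- `j` and `n` are the remainder and the quotient of the same number on division by the top index.
  obtain rfl : j' = j := by
    have hmod := congrArg (· % (topIndex e : ℕ)) hindex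
    simp only [Nat.add_mul_mod_self_right, Nat.mod_eq_of_lt hj, Nat.mod_eq_of_lt hj'] at hmod
    exact Fin.ext hmod
  obtain rfl : n' = n := Nat.eq_of_mul_eq_mul_right (topIndex_pos hd e) (Nat.add_left_cancel hindex)
  obtain rfl : a' = a := by omega
  exact add_right_cancel (h.trans h'.symm)

lemma IsStandard.apply_last_lt_sum_Ioi (hd : 2 ≤ d) {e e' : Fin (d + 1) →₀ ℕ} (he : IsStandard e)
    (he' : IsStandard e')
    (hweight : Finsupp.weight (bidegreeWeight d) e' = Finsupp.weight (bidegreeWeight d) e)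
    (hle : toLex (e (Fin.last d), topIndex e) ≤ toLex (e' (Fin.last d), topIndex e'))
    (hne : e' ≠ e) : e (Fin.last d) < ∑ i ∈ Finset.Ioi (topIndex e), e' i := by
  rcases Prod.Lex.toLex_le_toLex.1 hle with hlast | ⟨hlast, htop⟩
  · exact hlast.trans_le (Finset.single_le_sum (fun _ _ => Nat.zero_le _)
      (Finset.mem_Ioi.2 (topIndex_lt_last hd e)))
  · have htop_ne : topIndex e ≠ topIndex e' := fun h =>
      hne (he'.eq_of_weight_eq hd he hweight h.symm hlast.symm)
    exact hlast.trans_lt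
      (apply_last_lt_sum_Ioi_of_lt_topIndex hd (one_le_topIndex e) (htop.lt_of_ne htop_ne))

end StandardExponents

section MomentMap

variable (R : Type*) [CommRing R] (d : ℕ)

/-- The parametrization `m_c ↦ s t ^ c · x (x + 1) ⋯ (x + c - 1)` of the gamma moment variety, with
the degrees in `s` and `t` recorded by the grading. -/
noncomputable def gammaMomentMap :
    MvPolynomial (Fin (d + 1)) R →ₐ[R] AddMonoidAlgebra (Polynomial R) (ℕ × ℕ) :=
  gradedAeval (bidegreeWeight d) fun i => ascPochhammer R i

variable {R d}

lemma gammaMomentMap_X (i : Fin (d + 1)) :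
    gammaMomentMap R d (X i) = AddMonoidAlgebra.single (1, (i : ℕ)) (ascPochhammer R i) :=
  aeval_X _ i

lemma rootMultiplicity_prod_ascPochhammer_pow [IsDomain R] [CharZero R] (e : Fin (d + 1) →₀ ℕ)
    (k : Fin (d + 1)) :
    (e.prod fun i n => ascPochhammer R (i : ℕ) ^ n).rootMultiplicity (-((k : ℕ) : R)) =
      ∑ i ∈ Finset.Ioi k, e i := by
  rw [rootMultiplicity_finsuppProd_pow e (q := fun i : Fin (d + 1) => ascPochhammer R i)
    fun i => (monic_ascPochhammer R i).ne_zero, Finsupp.sum_fintype _ _ fun _ => zero_mul _]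
  simp [rootMultiplicity_neg_natCast_ascPochhammer, ← Finset.sum_filter, Finset.filter_lt_eq_Ioi]

/-- Among the exponents of one bidegree in `f`, the lexicographically smallest one for the pair
`(e d, topIndex e)` has the image with the strictly smallest root multiplicity at `-topIndex e`. -/
theorem eq_zero_of_gammaMomentMap_eq_zero [IsDomain R] [CharZero R] (hd : 2 ≤ d)
    {f : MvPolynomial (Fin (d + 1)) R} (hf : gammaMomentMap R d f = 0)
    (hstd : ∀ e ∈ f.support, IsStandard e) : f = 0 := by
  classical
  by_contra hf0
  obtain ⟨e₀, he₀⟩ := support_nonempty.2 hf0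
  set g := Finsupp.weight (bidegreeWeight d) e₀
  set T := f.support.filter fun e => Finsupp.weight (bidegreeWeight d) e = g with hT
  obtain ⟨e, he, hmin⟩ := T.exists_min_image (fun e => toLex (e (Fin.last d), topIndex e))
    ⟨e₀, Finset.mem_filter.2 ⟨he₀, rfl⟩⟩
  obtain ⟨hef, heg⟩ := Finset.mem_filter.1 he
  have hsum : ∑ e ∈ T, coeff e f • e.prod (fun i n => ascPochhammer R (i : ℕ) ^ n) = 0 := by
    rw [hT, ← coeff_gradedAeval, ← gammaMomentMap, hf]
    rfl
  refine mem_support_iff.1 hef (eq_zero_of_sum_smul_eq_zero_of_rootMultiplicity_lt hsum he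
    (Finset.prod_ne_zero_iff.2 fun i _ => pow_ne_zero _ (monic_ascPochhammer R i).ne_zero)
    (-((topIndex e : ℕ) : R)) fun e' he' hne => ?_)
  obtain ⟨hef', heg'⟩ := Finset.mem_filter.1 he'
  rw [rootMultiplicity_prod_ascPochhammer_pow, rootMultiplicity_prod_ascPochhammer_pow,
    sum_Ioi_topIndex hd]
  exact (hstd e hef).apply_last_lt_sum_Ioi hd (hstd e' hef') (heg'.trans heg.symm) (hmin e' he') hne

end MomentMap

section GammaMatrix

variable {d : ℕ}

lemma gammaMatrix_antidiagonal_eq_monomial (s : Fin 3 → Fin d) :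
    gammaMatrix d 0 (s 2) * gammaMatrix d 1 (s 1) * gammaMatrix d 2 (s 0) =
      monomial (antidiagExponent s) ((s 2 : ℕ) : ℂ) := by
  calc
    _ = C ((s 2 : ℕ) : ℂ) * X (s 2).castSucc * X (s 1).castSucc * X (s 0).succ := rfl
    _ = C ((s 2 : ℕ) : ℂ) * (X (s 0).succ * X (s 1).castSucc * X (s 2).castSucc) := by ring
    _ = _ := by simp only [X, C_mul_monomial, monomial_mul, mul_one, antidiagExponent]

lemma support_gammaMatrix_antidiagonal {s : Fin 3 → Fin d} (hs : StrictMono s) :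
    (gammaMatrix d 0 (s 2) * gammaMatrix d 1 (s 1) * gammaMatrix d 2 (s 0)).support =
      {antidiagExponent s} := by
  classical
  have hlt : s 1 < s 2 := hs (by decide)
  have hpos : (s 2 : ℕ) ≠ 0 := Nat.ne_zero_of_lt hlt
  rw [gammaMatrix_antidiagonal_eq_monomial, support_monomial, if_neg (Nat.cast_ne_zero.2 hpos)]

lemma gammaMomentMap_gammaMatrix_two (c : Fin d) :
    gammaMomentMap ℂ d (gammaMatrix d 2 c) =
      AddMonoidAlgebra.single (0, 1) 1 * gammaMomentMap ℂ d (gammaMatrix d 0 c) +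
        AddMonoidAlgebra.single (0, 1) Polynomial.X * gammaMomentMap ℂ d (gammaMatrix d 1 c) := by
  have h0 : gammaMatrix d 0 c = C ((c : ℕ) : ℂ) * X c.castSucc := rfl
  have h1 : gammaMatrix d 1 c = X c.castSucc := rfl
  have h2 : gammaMatrix d 2 c = X c.succ := rfl
  have hcoeff : gammaMomentMap ℂ d (C ((c : ℕ) : ℂ)) =
      AddMonoidAlgebra.single 0 ((c : ℕ) : Polynomial ℂ) := by
    rw [map_natCast, map_natCast, AddMonoidAlgebra.natCast_def]
  simp only [h0, h1, h2, map_mul, hcoeff, gammaMomentMap_X, AddMonoidAlgebra.single_mul_single,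
    Fin.val_succ, Fin.val_castSucc, zero_add, Prod.mk_add_mk, one_mul,
    ← AddMonoidAlgebra.single_add]
  rw [ascPochhammer_succ_right, add_comm 1 (c : ℕ)]
  congr 1
  ring

theorem gammaIdeal_le_ker_gammaMomentMap : gammaIdeal d ≤ RingHom.ker (gammaMomentMap ℂ d) := by
  refine Ideal.span_le.2 ?_
  rintro _ ⟨s, -, rfl⟩
  simp only [SetLike.mem_coe, RingHom.mem_ker, Matrix.det_fin_three, Matrix.submatrix_apply, id,
    map_add, map_sub, map_mul, gammaMomentMap_gammaMatrix_two]
  ring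

end GammaMatrix

/-- The `3 × 3` minors of `G` form a Gröbner basis of `I₃(G)` with respect to any monomial
order for which the leading monomial of each minor is its antidiagonal monomial (the unique
monomial of the product of the `(1,k)`, `(2,j)`, `(3,i)` entries of `G` for columns
`i < j < k`): for every nonzero `f ∈ I₃(G)`, the leading monomial of `f` (the `≼`-largest
element of its support) is divisible by the antidiagonal monomial of some minor. -/
theorem gamma_groebnerBasis (d : ℕ) (hd : 3 ≤ d)
    (le : (Fin (d + 1) →₀ ℕ) → (Fin (d + 1) →₀ ℕ) → Prop)
    (hlin : IsLinearOrder _ le)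
    (hadd : ∀ a b c : Fin (d + 1) →₀ ℕ, le a b → le (a + c) (b + c))
    (hzero : ∀ a : Fin (d + 1) →₀ ℕ, le 0 a)
    (hlead : ∀ s : Fin 3 → Fin d, StrictMono s →
      ∀ a ∈ (gammaMatrix d 0 (s 2) * gammaMatrix d 1 (s 1)
          * gammaMatrix d 2 (s 0)).support,
        a ∈ (((gammaMatrix d).submatrix id s).det).support ∧
          ∀ b ∈ (((gammaMatrix d).submatrix id s).det).support, le b a)
    (f : MvPolynomial (Fin (d + 1)) ℂ) (hf : f ∈ gammaIdeal d) (hf0 : f ≠ 0) :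
    ∃ lmf ∈ f.support, (∀ b ∈ f.support, le b lmf) ∧
      ∃ s : Fin 3 → Fin d, StrictMono s ∧
        ∃ a ∈ (gammaMatrix d 0 (s 2) * gammaMatrix d 1 (s 1)
            * gammaMatrix d 2 (s 0)).support,
          ∀ i : Fin (d + 1), a i ≤ lmf i := by
  set B := {p | ∃ s : Fin 3 → Fin d, StrictMono s ∧ p = ((gammaMatrix d).submatrix id s).det}
  let m := monomialOrderOfRel le hlin hadd hzero
  have hminor {s : Fin 3 → Fin d} (hs : StrictMono s) :=
    hlead s hs (antidiagExponent s) (by simp [support_gammaMatrix_antidiagonal hs])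
  have hdegree {s : Fin 3 → Fin d} (hs : StrictMono s) :
      m.degree ((gammaMatrix d).submatrix id s).det = antidiagExponent s :=
    monomialOrder_degree_eq m (hminor hs).1 (hminor hs).2
  have hunit : ∀ b ∈ B, IsUnit (m.leadingCoeff b) := by
    rintro _ ⟨s, hs, rfl⟩
    exact (m.leadingCoeff_ne_zero_iff.2 (support_nonempty.1 ⟨_, (hminor hs).1⟩)).isUnit
  have hnormal : ∀ r ∈ Ideal.span B,
      (∀ e ∈ r.support, ∀ b ∈ B, ¬ m.degree b ≤ e) → r = 0 := fun r hr hrB =>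
    eq_zero_of_gammaMomentMap_eq_zero (by omega) (gammaIdeal_le_ker_gammaMomentMap hr)
      fun e he s hs => hdegree hs ▸ hrB e he _ ⟨s, hs, rfl⟩
  obtain ⟨_, ⟨s, hs, rfl⟩, hle⟩ := exists_degree_le_degree_of_mem_span m hunit hnormal hf hf0
  exact ⟨m.degree f, m.degree_mem_support hf0,
    fun b hb => (monomialOrderOfRel_toSyn_le_iff hlin hadd hzero).1 (m.le_degree hb), s, hs,
    antidiagExponent s, by simp [support_gammaMatrix_antidiagonal hs], hdegree hs ▸ hle⟩
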